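/- Let X be a Hausdorff topological space, let φ : ℝ × X → X be continuous, and let E ⊆ X be a compact set. Assume the non-trapping condition: for every x ∈ E there exists t > 0 such that φ(t, x) ∉ E. Then there exists a finite constant κ₀ > 0 such that for every x ∈ E there exists t with 0 < t < κ₀ and φ(t, x) ∉ E; i.e., every trajectory starting in E leaves E within time κ₀. -/

import Mathlib

/-- If `E` is a compact subset of a Hausdorff space `X`, `φ : ℝ × X → X` is continuous,
and every trajectory starting in `E` leaves `E` at some positive time (non-trapping),
then there is a finite uniform bound `κ₀ > 0` such that every trajectory starting in
`E` leaves `E` within time `κ₀`. -/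
theorem uniform_exit_time_bound {X : Type*} [TopologicalSpace X] [T2Space X]
    (φ : ℝ × X → X) (hφ : Continuous φ) (E : Set X) (hE : IsCompact E)
    (hnt : ∀ x ∈ E, ∃ t : ℝ, 0 < t ∧ φ (t, x) ∉ E) :
    ∃ κ₀ : ℝ, 0 < κ₀ ∧ ∀ x ∈ E, ∃ t : ℝ, 0 < t ∧ t < κ₀ ∧ φ (t, x) ∉ E := by
  refine hE.induction_on
    (p := fun S => ∃ κ₀ : ℝ, 0 < κ₀ ∧ ∀ x ∈ S, ∃ t : ℝ, 0 < t ∧ t < κ₀ ∧ φ (t, x) ∉ E)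
    ?_ ?_ ?_ ?_
  · exact ⟨1, one_pos, fun x hx => absurd hx (Set.notMem_empty x)⟩
  · rintro S T hST ⟨κ, hκ, h⟩
    exact ⟨κ, hκ, fun x hx => h x (hST hx)⟩
  · rintro S T ⟨κ, hκ, h⟩ ⟨μ, _, h'⟩
    refine ⟨max κ μ, lt_max_of_lt_left hκ, ?_⟩
    rintro x (hx | hx)
    · obtain ⟨t, h0, h1, h2⟩ := h x hx
      exact ⟨t, h0, lt_max_of_lt_left h1, h2⟩
    · obtain ⟨t, h0, h1, h2⟩ := h' x hx
      exact ⟨t, h0, lt_max_of_lt_right h1, h2⟩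
  · intro x hx
    obtain ⟨t, h0, h1⟩ := hnt x hx
    have hc : Continuous fun y => φ (t, y) := hφ.comp (by fun_prop)
    have ho : IsOpen {y | φ (t, y) ∉ E} := hE.isClosed.isOpen_compl.preimage hc
    exact ⟨{y | φ (t, y) ∉ E}, mem_nhdsWithin_of_mem_nhds (ho.mem_nhds h1), t + 1,
      by linarith, fun y hy => ⟨t, h0, by linarith, hy⟩⟩
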